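/- Let H be a graph on [k], let ⋆ ∈ {ind, sub}, and let f_H^* be the optimal value of the corresponding optimization problem. Fix ε̄ > 0 and let E_ε̄ be the event that max_{v ∈ [n]} w_v < n^{1/(τ−1)}/ε̄ and min_{u≠v} ‖x_u − x_v‖ > ε̄ n^{−1/d}. Then for every δ > 0, limsup_{n→∞} E[ N^⋆(H) | E_ε̄ ] / n^{f_H^* + δ} < ∞. -/

import Mathlib

open MeasureTheory Filter Finset

noncomputable section

instance : Fact ((0:ℝ) < 1) := ⟨one_pos⟩

/-- The `d`-dimensional torus `ℝ^d/ℤ^d`, with the sup of coordinatewise circle distances. -/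
abbrev Torus (d : ℕ) := Fin d → AddCircle (1 : ℝ)

/-- Sample space of the GIRG on `n` vertices: weights, positions, and iid uniform
`[0,1]` coins deciding the presence of each potential edge. -/
abbrev GirgΩ (d n : ℕ) := (Fin n → ℝ) × (Fin n → Torus d) × (Sym2 (Fin n) → ℝ)

/-- The law of the randomness of the GIRG: iid weights with law `μW`, iid uniform positions
on the torus, iid uniform coins. -/
def girgMeasure (μW : Measure ℝ) (d n : ℕ) : Measure (GirgΩ d n) :=
  (Measure.pi fun _ : Fin n => μW).prod
    ((Measure.pi fun _ : Fin n => (volume : Measure (Torus d))).prod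
      (Measure.pi fun _ : Sym2 (Fin n) => volume.restrict (Set.Icc (0:ℝ) 1)))

/-- mean `μ = E[W]` of the weight distribution -/
def wMean (μW : Measure ℝ) : ℝ := ∫ x, x ∂μW

/-- Power-law tail assumption: `W ≥ 1` a.s. and `P(W > x) = c x^{1-τ} (1+o(1))` as `x → ∞`. -/
def WeightTail (τ c : ℝ) (μW : Measure ℝ) : Prop :=
  0 < c ∧ μW (Set.Iio 1) = 0 ∧
    Tendsto (fun x : ℝ => (μW (Set.Ioi x)).toReal / (c * x ^ (1 - τ))) atTop (nhds 1)

/-- GIRG connection probability `min(1, (w_u w_v / (n μ ‖x_u - x_v‖^d))^γ)`. -/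
def connProb (γ μbar : ℝ) (d n : ℕ) (w : Fin n → ℝ) (x : Fin n → Torus d)
    (u v : Fin n) : ℝ :=
  min 1 ((w u * w v / ((n : ℝ) * μbar * dist (x u) (x v) ^ d)) ^ γ)

/-- `u` and `v` are joined by an edge of the GIRG in outcome `ω`. -/
def girgEdge (γ μbar : ℝ) (d n : ℕ) (ω : GirgΩ d n) (u v : Fin n) : Prop :=
  u ≠ v ∧ ω.2.2 s(u, v) ≤ connProb γ μbar d n ω.1 ω.2.1 u v

/-- the window `[ε t, t/ε]` -/
def windowIcc (ε t : ℝ) : Set ℝ := Set.Icc (ε * t) (t / ε)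

/-- The set `M_ε^{(α,β)}` of ordered `k`-tuples of distinct vertices with prescribed
weights and inter-distances. -/
def Mset {k : ℕ} (ε : ℝ) (α : Fin k → ℝ) (β : Fin k → Fin k → ℝ) (d n : ℕ)
    (w : Fin n → ℝ) (x : Fin n → Torus d) : Set (Fin k → Fin n) :=
  {v | Function.Injective v ∧
    (∀ i, w (v i) ∈ windowIcc ε ((n : ℝ) ^ (α i))) ∧
    (∀ i j : Fin k, i < j → dist (x (v i)) (x (v j)) ∈ windowIcc ε ((n : ℝ) ^ (β i j)))}

/-- `N^{sub}(H; M_ε^{(α,β)})` -/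
def nSubM {k : ℕ} (H : SimpleGraph (Fin k)) (γ μbar ε : ℝ) (α : Fin k → ℝ)
    (β : Fin k → Fin k → ℝ) (d n : ℕ) (ω : GirgΩ d n) : ℕ :=
  Set.ncard {v : Fin k → Fin n | v ∈ Mset ε α β d n ω.1 ω.2.1 ∧
    ∀ i j : Fin k, H.Adj i j → girgEdge γ μbar d n ω (v i) (v j)}

/-- `N^{ind}(H; M_ε^{(α,β)})` -/
def nIndM {k : ℕ} (H : SimpleGraph (Fin k)) (γ μbar ε : ℝ) (α : Fin k → ℝ)
    (β : Fin k → Fin k → ℝ) (d n : ℕ) (ω : GirgΩ d n) : ℕ :=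
  Set.ncard {v : Fin k → Fin n | v ∈ Mset ε α β d n ω.1 ω.2.1 ∧
    ∀ i j : Fin k, i ≠ j → (H.Adj i j ↔ girgEdge γ μbar d n ω (v i) (v j))}

/-- `N^{sub}(H)` -/
def nSubTotal {k : ℕ} (H : SimpleGraph (Fin k)) (γ μbar : ℝ) (d n : ℕ)
    (ω : GirgΩ d n) : ℕ :=
  Set.ncard {v : Fin k → Fin n | Function.Injective v ∧
    ∀ i j : Fin k, H.Adj i j → girgEdge γ μbar d n ω (v i) (v j)}

/-- `N^{ind}(H)` -/
def nIndTotal {k : ℕ} (H : SimpleGraph (Fin k)) (γ μbar : ℝ) (d n : ℕ)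
    (ω : GirgΩ d n) : ℕ :=
  Set.ncard {v : Fin k → Fin n | Function.Injective v ∧
    ∀ i j : Fin k, i ≠ j → (H.Adj i j ↔ girgEdge γ μbar d n ω (v i) (v j))}

/-- `β` read as a symmetric matrix (only entries with `i < j` are meaningful). -/
def bsym {k : ℕ} (β : Fin k → Fin k → ℝ) (i j : Fin k) : ℝ := if i < j then β i j else β j i

/-- The feasible region `F`. -/
def Feasible (τ : ℝ) (d : ℕ) {k : ℕ} (α : Fin k → ℝ) (β : Fin k → Fin k → ℝ) : Prop :=
  (∀ i, α i ∈ Set.Icc (0 : ℝ) (1 / (τ - 1))) ∧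
  (∀ i j : Fin k, i < j → β i j ∈ Set.Icc (-(1 / (d : ℝ))) 0) ∧
  (∀ i j s : Fin k, i < j → s ≠ i → s ≠ j → β i j ≤ max (bsym β i s) (bsym β j s))

/-- `min_{i<j} β_{ij}` (with value `0 = sInf ∅` for the first vertex `j`,
which does not contribute). -/
def minBeta {k : ℕ} (β : Fin k → Fin k → ℝ) (j : Fin k) : ℝ :=
  sInf {x : ℝ | ∃ i, i < j ∧ x = β i j}

open scoped Classical in
/-- The exponent `f_H(α,β)`. -/
def fExp (τ γ : ℝ) (d : ℕ) {k : ℕ} (H : SimpleGraph (Fin k))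
    (α : Fin k → ℝ) (β : Fin k → Fin k → ℝ) : ℝ :=
  (k : ℝ) + (1 - τ) * ∑ i, α i + (d : ℝ) * ∑ j, minBeta β j +
    γ * ∑ p ∈ Finset.univ.filter (fun p : Fin k × Fin k => p.1 < p.2 ∧ H.Adj p.1 p.2),
        min (α p.1 + α p.2 - (d : ℝ) * β p.1 p.2 - 1) 0

/-- Extra constraints for the induced optimization problem:
`α_i + α_j ≤ 1 + d β_{ij}` for all non-edges. -/
def IndConstr (d : ℕ) {k : ℕ} (H : SimpleGraph (Fin k)) (α : Fin k → ℝ)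
    (β : Fin k → Fin k → ℝ) : Prop :=
  ∀ i j : Fin k, i < j → ¬H.Adj i j → α i + α j ≤ 1 + (d : ℝ) * β i j

/-- `(α,β)` is an optimal solution of the general optimization problem. -/
def IsOptimalSub (τ γ : ℝ) (d : ℕ) {k : ℕ} (H : SimpleGraph (Fin k))
    (α : Fin k → ℝ) (β : Fin k → Fin k → ℝ) : Prop :=
  Feasible τ d α β ∧
    ∀ α' β', Feasible τ d α' β' → fExp τ γ d H α' β' ≤ fExp τ γ d H α β

/-- `(α,β)` is an optimal solution of the induced optimization problem. -/
def IsOptimalInd (τ γ : ℝ) (d : ℕ) {k : ℕ} (H : SimpleGraph (Fin k))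
    (α : Fin k → ℝ) (β : Fin k → Fin k → ℝ) : Prop :=
  Feasible τ d α β ∧ IndConstr d H α β ∧
    ∀ α' β', Feasible τ d α' β' → IndConstr d H α' β' →
      fExp τ γ d H α' β' ≤ fExp τ γ d H α β

/-- the two kinds of subgraph counts -/
inductive StarKind | ind | sub

/-- `N^⋆(H; M_ε^{(α,β)})` -/
def starNM (s : StarKind) {k : ℕ} (H : SimpleGraph (Fin k)) (γ μbar ε : ℝ) (α : Fin k → ℝ)
    (β : Fin k → Fin k → ℝ) (d n : ℕ) (ω : GirgΩ d n) : ℕ :=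
  match s with
  | .sub => nSubM H γ μbar ε α β d n ω
  | .ind => nIndM H γ μbar ε α β d n ω

/-- `N^⋆(H)` -/
def starNTotal (s : StarKind) {k : ℕ} (H : SimpleGraph (Fin k)) (γ μbar : ℝ) (d n : ℕ)
    (ω : GirgΩ d n) : ℕ :=
  match s with
  | .sub => nSubTotal H γ μbar d n ω
  | .ind => nIndTotal H γ μbar d n ω

/-- optimality in the optimization problem corresponding to `⋆` -/
def starIsOptimal (s : StarKind) (τ γ : ℝ) (d : ℕ) {k : ℕ} (H : SimpleGraph (Fin k))
    (α : Fin k → ℝ) (β : Fin k → Fin k → ℝ) : Prop :=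
  match s with
  | .sub => IsOptimalSub τ γ d H α β
  | .ind => IsOptimalInd τ γ d H α β

/-- the optimal value `f_H^*` of the optimization problem corresponding to `⋆` -/
def starOptVal (s : StarKind) (τ γ : ℝ) (d : ℕ) {k : ℕ} (H : SimpleGraph (Fin k)) : ℝ :=
  match s with
  | .sub => sSup {x | ∃ α β, Feasible τ d α β ∧ x = fExp τ γ d H α β}
  | .ind => sSup {x | ∃ α β, Feasible τ d α β ∧ IndConstr d H α β ∧ x = fExp τ γ d H α β}

/-- `(α,β)` is the unique optimal solution (in the `α`-variables and the
`β`-variables with `i < j`). -/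
def UniquelyOptimal (s : StarKind) (τ γ : ℝ) (d : ℕ) {k : ℕ} (H : SimpleGraph (Fin k))
    (α : Fin k → ℝ) (β : Fin k → Fin k → ℝ) : Prop :=
  starIsOptimal s τ γ d H α β ∧
    ∀ α' β', starIsOptimal s τ γ d H α' β' →
      α' = α ∧ ∀ i j : Fin k, i < j → β' i j = β i j


/-- the cutoff event `E_ε̄` on weights and inter-distances -/
def cutoffEvent (τ εbar : ℝ) (d n : ℕ) : Set (GirgΩ d n) :=
  {ω | (∀ v, ω.1 v < (n : ℝ) ^ (1 / (τ - 1)) / εbar) ∧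
    ∀ u v : Fin n, u ≠ v → εbar * (n : ℝ) ^ (-(1 / (d : ℝ))) < dist (ω.2.1 u) (ω.2.1 v)}

/-!
Given weights `w` and positions `x` satisfying the cutoffs, a tuple of vertices spans a copy of `H`
with probability at most the product of `min 1 ((w_i w_j / (n m ‖x_i - x_j‖ ^ d)) ^ γ)` over its
edges. Put `w_i = n ^ α_i` and `‖x_i - x_j‖ = n ^ β_{ij}`: up to constants, that product is
`n ^ (f_H(α, β) - k) * ∏ i, n ^ ((τ - 1) α_i) * ∏ j, n ^ (-d min_{i<j} β_{ij})`. Replacing distances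
by single-linkage distances, which are comparable and satisfy the ultrametric inequality, makes
`(α, β)` feasible, so `f_H(α, β) ≤ f_H^*`. In the induced problem, a non-edge that violates its
constraint by more than a constant factor is present almost surely, and the tuple contributes `0`.

It remains to average the two other factors. The first is the `(τ - 1)`-th moment of the truncated
weights, which is `n ^ o(1)` since all lower moments are finite. For the second,
`n ^ (-d min_{i<j} β_{ij})` is at most a constant times `1 + ∑_{i<j} ‖x_i - x_j‖ ^ (-d)`; summing
over tuples one vertex at a time costs `n ^ (1 + o(1))` per vertex, because a packing argument
bounds the number of separated points within distance `D` of a given point by a multiple of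
`n D ^ d`.
-/

section SingleLinkage

variable {ι Y : Type*} [PseudoMetricSpace Y] (y : ι → Y)

/-- The graph joining the indices of points at distance at most `t` (the `1`-skeleton of the
Vietoris–Rips complex). -/
def proximityGraph (t : ℝ) : SimpleGraph ι where
  Adj i j := i ≠ j ∧ dist (y i) (y j) ≤ t
  symm := ⟨fun i j h => ⟨h.1.symm, dist_comm (y i) (y j) ▸ h.2⟩⟩
  loopless := ⟨fun _ h => h.1 rfl⟩

/-- The single-linkage distance: the smallest scale at which `i` and `j` lie in the same cluster.
It is an ultrametric on the indices, which replaces `dist` in the optimization problem. -/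
def singleLinkage (i j : ι) : ℝ :=
  sInf {t : ℝ | 0 ≤ t ∧ (proximityGraph y t).Reachable i j}

lemma proximityGraph_mono : Monotone (proximityGraph y) :=
  fun _ _ hst _ _ h => ⟨h.1, h.2.trans hst⟩

variable {y} {i j : ι} {t : ℝ}

lemma dist_le_length_mul_of_walk (p : (proximityGraph y t).Walk i j) :
    dist (y i) (y j) ≤ p.length * t := by
  induction p with
  | nil => simp
  | @cons i j l hij p ih =>
    calc dist (y i) (y l) ≤ dist (y i) (y j) + dist (y j) (y l) := dist_triangle _ _ _
      _ ≤ t + p.length * t := add_le_add hij.2 ih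
      _ = (SimpleGraph.Walk.cons hij p).length * t := by
        rw [SimpleGraph.Walk.length_cons]; push_cast; ring

lemma singleLinkage_le_of_reachable (ht : 0 ≤ t) (h : (proximityGraph y t).Reachable i j) :
    singleLinkage y i j ≤ t :=
  csInf_le ⟨0, fun _ hs => hs.1⟩ ⟨ht, h⟩

variable (y i j) in
lemma reachable_proximityGraph_dist : (proximityGraph y (dist (y i) (y j))).Reachable i j := by
  by_cases hij : i = j
  · exact hij ▸ .refl i
  · exact SimpleGraph.Adj.reachable ⟨hij, le_rfl⟩

variable (y i j) in
lemma singleLinkage_le_dist : singleLinkage y i j ≤ dist (y i) (y j) :=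
  singleLinkage_le_of_reachable dist_nonneg (reachable_proximityGraph_dist y i j)

lemma nonneg_and_reachable_of_singleLinkage_lt (ht : singleLinkage y i j < t) :
    0 ≤ t ∧ (proximityGraph y t).Reachable i j := by
  have hne : {t : ℝ | 0 ≤ t ∧ (proximityGraph y t).Reachable i j}.Nonempty :=
    ⟨_, dist_nonneg, reachable_proximityGraph_dist y i j⟩
  obtain ⟨s, hs, hst⟩ := exists_lt_of_csInf_lt hne ht
  exact ⟨hs.1.trans hst.le, hs.2.mono (proximityGraph_mono y hst.le)⟩

variable (y i j) in
lemma singleLinkage_comm : singleLinkage y i j = singleLinkage y j i := by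
  simp only [singleLinkage, SimpleGraph.reachable_comm]

variable (y i j) in
lemma singleLinkage_le_max (l : ι) :
    singleLinkage y i j ≤ max (singleLinkage y i l) (singleLinkage y j l) := by
  refine le_of_forall_gt_imp_ge_of_dense fun t ht => ?_
  obtain ⟨hil, hjl⟩ := max_lt_iff.1 ht
  obtain ⟨ht0, hil⟩ := nonneg_and_reachable_of_singleLinkage_lt hil
  exact singleLinkage_le_of_reachable ht0
    (hil.trans (nonneg_and_reachable_of_singleLinkage_lt hjl).2.symm)

variable (y i j) in
lemma dist_le_card_mul_singleLinkage [Fintype ι] :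
    dist (y i) (y j) ≤ Fintype.card ι * singleLinkage y i j := by
  have hcard : (0 : ℝ) < Fintype.card ι := by exact_mod_cast Fintype.card_pos_iff.2 ⟨i⟩
  rw [mul_comm, ← div_le_iff₀ hcard]
  refine le_of_forall_gt_imp_ge_of_dense fun t ht => ?_
  obtain ⟨ht0, hreach⟩ := nonneg_and_reachable_of_singleLinkage_lt ht
  obtain ⟨p, hp⟩ := hreach.exists_isPath
  rw [div_le_iff₀' hcard]
  calc dist (y i) (y j) ≤ p.length * t := dist_le_length_mul_of_walk p
    _ ≤ Fintype.card ι * t := by gcongr; exact hp.length_lt.le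

end SingleLinkage

section Optimization

variable {k d : ℕ} {τ γ : ℝ} {α : Fin k → ℝ} {β : Fin k → Fin k → ℝ}

open scoped Classical in
/-- The edges of `H`, each listed once as an increasing pair; the index set of the last sum in
`fExp`. -/
def edgePairs (H : SimpleGraph (Fin k)) : Finset (Fin k × Fin k) :=
  univ.filter fun p => p.1 < p.2 ∧ H.Adj p.1 p.2

lemma mem_edgePairs {H : SimpleGraph (Fin k)} {p : Fin k × Fin k} :
    p ∈ edgePairs H ↔ p.1 < p.2 ∧ H.Adj p.1 p.2 := by
  simp [edgePairs]

lemma minBeta_eq_zero_or_exists (β : Fin k → Fin k → ℝ) (j : Fin k) :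
    minBeta β j = 0 ∨ ∃ i < j, minBeta β j = β i j := by
  obtain hempty | hne := {x : ℝ | ∃ i, i < j ∧ x = β i j}.eq_empty_or_nonempty
  · exact .inl (by rw [minBeta, hempty, Real.sInf_empty])
  · have hfin : {x : ℝ | ∃ i, i < j ∧ x = β i j}.Finite :=
      (Set.finite_range fun i => β i j).subset fun _ ⟨i, _, hx⟩ => ⟨i, hx.symm⟩
    exact .inr (hne.csInf_mem hfin)

lemma Feasible.minBeta_nonpos (h : Feasible τ d α β) (j : Fin k) : minBeta β j ≤ 0 := by
  obtain h0 | ⟨i, hij, hi⟩ := minBeta_eq_zero_or_exists β j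
  · exact h0.le
  · exact hi ▸ (h.2.1 i j hij).2

lemma Feasible.fExp_le (hτ : 1 < τ) (hγ : 0 ≤ γ) (H : SimpleGraph (Fin k))
    (h : Feasible τ d α β) : fExp τ γ d H α β ≤ k := by
  have hweights : (1 - τ) * ∑ i, α i ≤ 0 :=
    mul_nonpos_of_nonpos_of_nonneg (by linarith) (sum_nonneg fun i _ => (h.1 i).1)
  have hpositions : (d : ℝ) * ∑ j, minBeta β j ≤ 0 :=
    mul_nonpos_of_nonneg_of_nonpos d.cast_nonneg (sum_nonpos fun j _ => h.minBeta_nonpos j)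
  have hedges : γ * ∑ p ∈ edgePairs H, min (α p.1 + α p.2 - d * β p.1 p.2 - 1) 0 ≤ 0 :=
    mul_nonpos_of_nonneg_of_nonpos hγ (sum_nonpos fun p _ => min_le_right _ _)
  rw [edgePairs] at hedges
  rw [fExp]
  linarith

lemma Feasible.fExp_le_starOptVal (hτ : 1 < τ) (hγ : 0 ≤ γ) {H : SimpleGraph (Fin k)}
    {s : StarKind} (h : Feasible τ d α β) (hind : s = .ind → IndConstr d H α β) :
    fExp τ γ d H α β ≤ starOptVal s τ γ d H := by
  cases s with
  | sub =>
    refine le_csSup ⟨k, ?_⟩ ⟨α, β, h, rfl⟩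
    rintro _ ⟨α', β', h', rfl⟩
    exact h'.fExp_le hτ hγ H
  | ind =>
    refine le_csSup ⟨k, ?_⟩ ⟨α, β, h, hind rfl, rfl⟩
    rintro _ ⟨α', β', h', -, rfl⟩
    exact h'.fExp_le hτ hγ H

lemma rpow_sum_edgePairs_eq (τ γ : ℝ) (d : ℕ) (H : SimpleGraph (Fin k)) (α : Fin k → ℝ)
    (β : Fin k → Fin k → ℝ) {n : ℝ} (hn : 0 < n) :
    n ^ (γ * ∑ p ∈ edgePairs H, min (α p.1 + α p.2 - d * β p.1 p.2 - 1) 0) =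
      n ^ (fExp τ γ d H α β - k) * (∏ i, (n ^ α i) ^ (τ - 1)) *
        ∏ j, ((n ^ minBeta β j) ^ d)⁻¹ := by
  have hweights : ∏ i, (n ^ α i) ^ (τ - 1) = n ^ ((τ - 1) * ∑ i, α i) := by
    rw [Finset.mul_sum, Real.rpow_sum_of_pos hn]
    simp only [← Real.rpow_mul hn.le, mul_comm]
  have hpositions : ∏ j, ((n ^ minBeta β j) ^ d)⁻¹ = n ^ (-(d * ∑ j, minBeta β j)) := by
    rw [Finset.mul_sum, ← sum_neg_distrib, Real.rpow_sum_of_pos hn]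
    simp only [Real.rpow_neg hn.le, ← Real.rpow_mul_natCast hn.le, mul_comm]
  rw [hweights, hpositions, ← Real.rpow_add hn, ← Real.rpow_add hn, fExp, edgePairs]
  congr 1
  ring

end Optimization

section Exponents

variable {Y : Type*} [PseudoMetricSpace Y] {k d : ℕ} {τ γ ε m a n : ℝ}

/-- Weights and positions of finitely many vertices in the range allowed by the cutoff event. The
number `n` of vertices of the surrounding random graph is a real parameter. -/
structure IsAdmissible {ι : Type*} (τ ε : ℝ) (d : ℕ) (n : ℝ) (W : ι → ℝ) (y : ι → Y) : Prop where
  one_le_weight (i : ι) : 1 ≤ W i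
  weight_lt (i : ι) : W i < n ^ (1 / (τ - 1)) / ε
  lt_dist {i j : ι} (h : i ≠ j) : ε * n ^ (-(1 / (d : ℝ))) < dist (y i) (y j)
  dist_le_one (i j : ι) : dist (y i) (y j) ≤ 1

lemma IsAdmissible.comp {ι κ : Type*} {W : ι → ℝ} {y : ι → Y} (h : IsAdmissible τ ε d n W y)
    {v : κ → ι} (hv : v.Injective) : IsAdmissible τ ε d n (W ∘ v) (y ∘ v) :=
  ⟨fun _ => h.one_le_weight _, fun _ => h.weight_lt _, fun hij => h.lt_dist (hv.ne hij),
    fun _ _ => h.dist_le_one _ _⟩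

/-- The exponent `α_i` realised by the weights `W`. Dividing by the constant `a` pushes it below
`1 / (τ - 1)`. -/
def weightExponent (n a : ℝ) (W : Fin k → ℝ) (i : Fin k) : ℝ :=
  Real.logb n (max 1 (W i / a))

/-- The exponent `β_{ij}` realised by the positions `y`. Single linkage makes it an ultrametric. -/
def distExponent (n : ℝ) (d : ℕ) (y : Fin k → Y) (i j : Fin k) : ℝ :=
  Real.logb n (max (n ^ (-(1 / (d : ℝ)))) (singleLinkage y i j))

lemma rpow_weightExponent (hn : 1 < n) (W : Fin k → ℝ) (i : Fin k) :
    n ^ weightExponent n a W i = max 1 (W i / a) :=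
  Real.rpow_logb (by positivity) hn.ne' (by positivity)

lemma rpow_distExponent (hn : 1 < n) (y : Fin k → Y) (i j : Fin k) :
    n ^ distExponent n d y i j = max (n ^ (-(1 / (d : ℝ)))) (singleLinkage y i j) :=
  have hn0 : 0 < n := by positivity
  Real.rpow_logb hn0 hn.ne' (lt_max_of_lt_left (Real.rpow_pos_of_pos hn0 _))

lemma weight_le_mul_rpow_weightExponent (hn : 1 < n) (ha : 0 < a) (W : Fin k → ℝ) (i : Fin k) :
    W i ≤ a * n ^ weightExponent n a W i := by
  rw [rpow_weightExponent hn, ← div_le_iff₀' ha]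
  exact le_max_right _ _

lemma dist_le_mul_rpow_distExponent (hn : 1 < n) (y : Fin k → Y) (i j : Fin k) :
    dist (y i) (y j) ≤ k * n ^ distExponent n d y i j := by
  rw [rpow_distExponent hn]
  calc dist (y i) (y j) ≤ k * singleLinkage y i j := by
        simpa only [Fintype.card_fin] using dist_le_card_mul_singleLinkage y i j
    _ ≤ k * max (n ^ (-(1 / (d : ℝ)))) (singleLinkage y i j) := by gcongr; exact le_max_right _ _

lemma neg_one_div_le_distExponent (hn : 1 < n) (y : Fin k → Y) (i j : Fin k) :
    -(1 / (d : ℝ)) ≤ distExponent n d y i j := by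
  rw [← Real.rpow_le_rpow_left_iff hn, rpow_distExponent hn]
  exact le_max_left _ _

lemma distExponent_le_max (hn : 1 < n) (y : Fin k → Y) (i j l : Fin k) :
    distExponent n d y i j ≤ max (distExponent n d y i l) (distExponent n d y j l) := by
  rw [← Real.rpow_le_rpow_left_iff hn, (Real.monotone_rpow_of_base_ge_one hn.le).map_max]
  simp only [rpow_distExponent hn]
  exact (max_le_max_left _ (singleLinkage_le_max y i j l)).trans_eq (sup_sup_distrib_left _ _ _)

lemma bsym_distExponent (y : Fin k → Y) (i j : Fin k) :
    bsym (distExponent n d y) i j = distExponent n d y i j := by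
  rw [bsym, ite_eq_left_iff]
  exact fun _ => by rw [distExponent, singleLinkage_comm, distExponent]

lemma max_one_div_mul_max_one_div_le {x x' : ℝ} (ha : 1 ≤ a) (hx : 1 ≤ x) (hx' : 1 ≤ x') :
    max 1 (x / a) * max 1 (x' / a) ≤ max 1 (x * x' / a) := by
  have hprod : 0 ≤ x * x' / a := by positivity
  rw [max_mul_of_nonneg _ _ (by positivity), one_mul, mul_max_of_nonneg _ _ (by positivity),
    mul_one, div_mul_div_comm, ← div_div]
  refine max_le (max_le_max_left 1 ?_) (max_le ?_ ?_)
  · gcongr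
    exact le_mul_of_one_le_left (by positivity) hx
  · refine le_max_of_le_right ?_
    gcongr
    exact le_mul_of_one_le_right (by positivity) hx'
  · exact le_max_of_le_right (div_le_self hprod ha)

/-- The bound on the product of the factors `n ^ (-d * min_{i<j} β_{ij})` in terms of the
positions; its sum over all tuples of vertices is of order `n ^ k` up to logarithms. -/
def invDistProd (d : ℕ) (y : Fin k → Y) : ℝ :=
  ∏ j, (1 + ∑ i with i < j, (dist (y i) (y j) ^ d)⁻¹)

lemma min_one_rpow_le_mul_rpow {K e x : ℝ} (hγ : 0 ≤ γ) (hn : 1 < n) (hx : 0 ≤ x)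
    (hxK : x ≤ K * n ^ e) : min 1 (x ^ γ) ≤ max 1 K ^ γ * n ^ (γ * min e 0) := by
  have hn0 : 0 < n := by positivity
  have hmin : min 1 x ≤ max 1 K * n ^ min e 0 := by
    rcases min_choice e 0 with he | he <;> rw [he]
    · exact (min_le_right _ _).trans (hxK.trans (by gcongr; exact le_max_right _ _))
    · rw [Real.rpow_zero, mul_one]
      exact (min_le_left _ _).trans (le_max_left _ _)
  calc min 1 (x ^ γ) = min 1 x ^ γ := by
        rcases le_total 1 x with h1 | h1
        · rw [min_eq_left h1, Real.one_rpow, min_eq_left (Real.one_le_rpow h1 hγ)]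
        · rw [min_eq_right h1, min_eq_right (Real.rpow_le_one hx h1 hγ)]
    _ ≤ (max 1 K * n ^ min e 0) ^ γ := by gcongr
    _ = max 1 K ^ γ * n ^ (γ * min e 0) := by
        rw [Real.mul_rpow (by positivity) (by positivity), ← Real.rpow_mul hn0.le, mul_comm γ]

namespace IsAdmissible

variable {W : Fin k → ℝ} {y : Fin k → Y}

lemma rpow_weightExponent_le (h : IsAdmissible τ ε d n W y) (hn : 1 < n) (ha : 1 ≤ a) (i : Fin k) :
    n ^ weightExponent n a W i ≤ W i := by
  rw [rpow_weightExponent hn]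
  have hW := h.one_le_weight i
  exact max_le hW (div_le_self (by linarith) ha)

lemma rpow_distExponent_le (h : IsAdmissible τ ε d n W y) (hn : 1 < n) (ha : 1 ≤ a)
    (hεa : 1 ≤ ε * a) {i j : Fin k} (hij : i ≠ j) :
    n ^ distExponent n d y i j ≤ a * dist (y i) (y j) := by
  rw [rpow_distExponent hn]
  refine max_le ?_ ((singleLinkage_le_dist y i j).trans (le_mul_of_one_le_left dist_nonneg ha))
  have hpos : 0 < n ^ (-(1 / (d : ℝ))) := Real.rpow_pos_of_pos (by positivity) _
  calc n ^ (-(1 / (d : ℝ))) ≤ ε * a * n ^ (-(1 / (d : ℝ))) := le_mul_of_one_le_left hpos.le hεa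
    _ = a * (ε * n ^ (-(1 / (d : ℝ)))) := by ring
    _ ≤ a * dist (y i) (y j) := by gcongr; exact (h.lt_dist hij).le

lemma weightExponent_mem_Icc (h : IsAdmissible τ ε d n W y) (hτ : 1 < τ) (hn : 1 < n)
    (ha : 1 ≤ a) (hεa : 1 ≤ ε * a) (i : Fin k) :
    weightExponent n a W i ∈ Set.Icc 0 (1 / (τ - 1)) := by
  have hM : 0 < n ^ (1 / (τ - 1)) := Real.rpow_pos_of_pos (by positivity) _
  refine ⟨Real.logb_nonneg hn (le_max_left _ _), ?_⟩
  rw [← Real.rpow_le_rpow_left_iff hn, rpow_weightExponent hn]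
  refine max_le (Real.one_le_rpow hn.le (one_div_nonneg.2 (by linarith))) ?_
  calc W i / a ≤ n ^ (1 / (τ - 1)) / ε / a := by gcongr; exact (h.weight_lt i).le
    _ = n ^ (1 / (τ - 1)) / (ε * a) := by rw [div_div]
    _ ≤ n ^ (1 / (τ - 1)) := div_le_self hM.le hεa

lemma distExponent_nonpos (h : IsAdmissible τ ε d n W y) (hn : 1 < n) (i j : Fin k) :
    distExponent n d y i j ≤ 0 := by
  rw [← Real.rpow_le_rpow_left_iff hn, rpow_distExponent hn, Real.rpow_zero]
  refine max_le ?_ ((singleLinkage_le_dist y i j).trans (h.dist_le_one i j))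
  exact Real.rpow_le_one_of_one_le_of_nonpos hn.le (neg_nonpos.2 (by positivity))

theorem feasible_exponents (h : IsAdmissible τ ε d n W y) (hτ : 1 < τ) (hn : 1 < n)
    (ha : 1 ≤ a) (hεa : 1 ≤ ε * a) :
    Feasible τ d (weightExponent n a W) (distExponent n d y) := by
  refine ⟨h.weightExponent_mem_Icc hτ hn ha hεa, fun i j _ =>
    ⟨neg_one_div_le_distExponent hn y i j, h.distExponent_nonpos hn i j⟩, fun i j l _ _ _ => ?_⟩
  rw [bsym_distExponent, bsym_distExponent]
  exact distExponent_le_max hn y i j l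

theorem indConstr_exponents (h : IsAdmissible τ ε d n W y) (H : SimpleGraph (Fin k)) (hd : 1 ≤ d)
    (hn : 1 < n) (hm : 0 < m) (ha : 1 ≤ a) (hma : m * k ^ d ≤ a)
    (hind : ∀ i j, i < j → ¬H.Adj i j → W i * W j ≤ n * m * dist (y i) (y j) ^ d) :
    IndConstr d H (weightExponent n a W) (distExponent n d y) := by
  intro i j hij hadj
  have hn0 : 0 < n := by positivity
  have ha0 : 0 < a := by positivity
  have hd0 : (0 : ℝ) < d := by exact_mod_cast hd
  have hexp : 0 ≤ 1 + d * distExponent n d y i j := by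
    have := mul_le_mul_of_nonneg_left (neg_one_div_le_distExponent (d := d) hn y i j) hd0.le
    rw [mul_neg, mul_one_div_cancel hd0.ne'] at this
    linarith
  have hpow : n * (n ^ distExponent n d y i j) ^ d = n ^ (1 + d * distExponent n d y i j) := by
    rw [Real.rpow_add hn0, Real.rpow_one, ← Real.rpow_mul_natCast hn0.le, mul_comm (d : ℝ)]
  rw [← Real.rpow_le_rpow_left_iff hn, Real.rpow_add hn0, rpow_weightExponent hn,
    rpow_weightExponent hn]
  refine (max_one_div_mul_max_one_div_le ha (h.one_le_weight i) (h.one_le_weight j)).trans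
    (max_le (Real.one_le_rpow hn.le hexp) ?_)
  rw [div_le_iff₀ ha0]
  calc W i * W j ≤ n * m * dist (y i) (y j) ^ d := hind i j hij hadj
    _ ≤ n * m * (k * n ^ distExponent n d y i j) ^ d := by
        gcongr; exact dist_le_mul_rpow_distExponent hn y i j
    _ = n ^ (1 + d * distExponent n d y i j) * (m * k ^ d) := by rw [← hpow]; ring
    _ ≤ n ^ (1 + d * distExponent n d y i j) * a := by gcongr

lemma min_one_ratio_rpow_le (h : IsAdmissible τ ε d n W y) (hγ : 0 ≤ γ) (hn : 1 < n) (hm : 0 < m)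
    (ha : 1 ≤ a) (hεa : 1 ≤ ε * a) {i j : Fin k} (hij : i ≠ j) :
    min 1 ((W i * W j / (n * m * dist (y i) (y j) ^ d)) ^ γ) ≤
      max 1 (a ^ (d + 2) / m) ^ γ * n ^ (γ * min (weightExponent n a W i + weightExponent n a W j -
        d * distExponent n d y i j - 1) 0) := by
  set e := weightExponent n a W i + weightExponent n a W j - d * distExponent n d y i j - 1 with he
  have hn0 : 0 < n := by positivity
  have ha0 : 0 < a := by positivity
  have hWi := h.one_le_weight i
  have hWj := h.one_le_weight j
  have hpow : n ^ e = n ^ weightExponent n a W i * n ^ weightExponent n a W j /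
      (n * (n ^ distExponent n d y i j) ^ d) := by
    rw [he, Real.rpow_sub_one hn0.ne', Real.rpow_sub hn0, Real.rpow_add hn0,
      mul_comm (d : ℝ), Real.rpow_mul_natCast hn0.le, div_div, mul_comm n]
  have hratio : W i * W j / (n * m * dist (y i) (y j) ^ d) ≤ a ^ (d + 2) / m * n ^ e := by
    have hdist : n ^ distExponent n d y i j / a ≤ dist (y i) (y j) :=
      (div_le_iff₀' ha0).2 (h.rpow_distExponent_le hn ha hεa hij)
    calc W i * W j / (n * m * dist (y i) (y j) ^ d)
        ≤ a * n ^ weightExponent n a W i * (a * n ^ weightExponent n a W j) /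
          (n * m * (n ^ distExponent n d y i j / a) ^ d) := by
          gcongr <;> exact weight_le_mul_rpow_weightExponent hn ha0 W _
      _ = a ^ (d + 2) / m * n ^ e := by rw [hpow, div_pow, pow_add]; field_simp
  exact min_one_rpow_le_mul_rpow hγ hn (by positivity) hratio

lemma dist_pos (h : IsAdmissible τ ε d n W y) (hn : 1 < n) {i j : Fin k} (hij : i ≠ j) :
    0 < dist (y i) (y j) := by
  have hn0 : 0 < n := by positivity
  have hquot : 0 < n ^ (1 / (τ - 1)) / ε :=
    zero_lt_one.trans_le ((h.one_le_weight i).trans (h.weight_lt i).le)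
  have hε : 0 < ε := (div_pos_iff_of_pos_left (Real.rpow_pos_of_pos hn0 _)).1 hquot
  exact (mul_pos hε (Real.rpow_pos_of_pos hn0 _)).trans (h.lt_dist hij)

lemma inv_rpow_minBeta_le (h : IsAdmissible τ ε d n W y) (hn : 1 < n) (j : Fin k) :
    ((n ^ minBeta (distExponent n d y) j) ^ d)⁻¹ ≤
      k ^ d * (1 + ∑ i with i < j, (dist (y i) (y j) ^ d)⁻¹) := by
  have hk : 0 < (k : ℝ) := by exact_mod_cast j.pos
  have hterm (i : Fin k) : 0 ≤ (dist (y i) (y j) ^ d)⁻¹ := by positivity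
  have hsum := sum_nonneg fun i (_ : i ∈ univ.filter (· < j)) => hterm i
  obtain h0 | ⟨i, hij, hi⟩ := minBeta_eq_zero_or_exists (distExponent n d y) j
  · rw [h0, Real.rpow_zero, one_pow, inv_one]
    exact one_le_mul_of_one_le_of_one_le (one_le_pow₀ (by exact_mod_cast j.pos)) (by linarith)
  · have hdist : 0 < dist (y i) (y j) := h.dist_pos hn hij.ne
    rw [hi]
    calc ((n ^ distExponent n d y i j) ^ d)⁻¹ ≤ ((dist (y i) (y j) / k) ^ d)⁻¹ := by
          gcongr
          exact (div_le_iff₀' hk).2 (dist_le_mul_rpow_distExponent hn y i j)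
      _ = k ^ d * (dist (y i) (y j) ^ d)⁻¹ := by rw [div_pow, inv_div, div_eq_mul_inv]
      _ ≤ k ^ d * (1 + ∑ i with i < j, (dist (y i) (y j) ^ d)⁻¹) := by
          gcongr
          have hi : i ∈ univ.filter (· < j) := mem_filter.2 ⟨mem_univ i, hij⟩
          exact (single_le_sum (fun i _ => hterm i) hi).trans (le_add_of_nonneg_left zero_le_one)

theorem prod_min_one_ratio_rpow_le (h : IsAdmissible τ ε d n W y) (H : SimpleGraph (Fin k))
    (s : StarKind) (hd : 1 ≤ d) (hτ : 1 < τ) (hγ : 0 ≤ γ) (hn : 1 < n) (hm : 0 < m)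
    (ha : 1 ≤ a) (hεa : 1 ≤ ε * a) (hma : m * k ^ d ≤ a)
    (hind : s = .ind → ∀ i j, i < j → ¬H.Adj i j → W i * W j ≤ n * m * dist (y i) (y j) ^ d) :
    ∏ p ∈ edgePairs H, min 1 ((W p.1 * W p.2 / (n * m * dist (y p.1) (y p.2) ^ d)) ^ γ) ≤
      (max 1 (a ^ (d + 2) / m) ^ γ) ^ #(edgePairs H) * (k ^ d) ^ k *
        n ^ (starOptVal s τ γ d H - k) * (∏ i, W i ^ (τ - 1)) * invDistProd d y := by
  set K := max 1 (a ^ (d + 2) / m)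
  set α := weightExponent n a W
  set β := distExponent n d y
  have hn0 : 0 < n := by positivity
  have hfeasible : Feasible τ d α β := h.feasible_exponents hτ hn ha hεa
  have hopt : fExp τ γ d H α β ≤ starOptVal s τ γ d H :=
    hfeasible.fExp_le_starOptVal hτ hγ fun hs => h.indConstr_exponents H hd hn hm ha hma (hind hs)
  calc ∏ p ∈ edgePairs H, min 1 ((W p.1 * W p.2 / (n * m * dist (y p.1) (y p.2) ^ d)) ^ γ)
      ≤ ∏ p ∈ edgePairs H, K ^ γ * n ^ (γ * min (α p.1 + α p.2 - d * β p.1 p.2 - 1) 0) := by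
        refine prod_le_prod (fun p _ => ?_) fun p hp =>
          h.min_one_ratio_rpow_le hγ hn hm ha hεa (mem_edgePairs.1 hp).1.ne
        have hi := h.one_le_weight p.1
        have hj := h.one_le_weight p.2
        positivity
    _ = (K ^ γ) ^ #(edgePairs H) * (n ^ (fExp τ γ d H α β - k) * (∏ i, (n ^ α i) ^ (τ - 1)) *
          ∏ j, ((n ^ minBeta β j) ^ d)⁻¹) := by
        rw [← rpow_sum_edgePairs_eq τ γ d H α β hn0, Finset.mul_sum, Real.rpow_sum_of_pos hn0,
          prod_mul_distrib, prod_const]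
    _ ≤ (K ^ γ) ^ #(edgePairs H) * (n ^ (starOptVal s τ γ d H - k) * (∏ i, W i ^ (τ - 1)) *
          ∏ j : Fin k, (k ^ d * (1 + ∑ i with i < j, (dist (y i) (y j) ^ d)⁻¹))) := by
        have hW (i : Fin k) : 0 ≤ W i := zero_le_one.trans (h.one_le_weight i)
        gcongr with i _ j _
        · exact mul_nonneg (by positivity) (prod_nonneg fun i _ => Real.rpow_nonneg (hW i) _)
        · exact hn.le
        · exact h.rpow_weightExponent_le hn ha i
        · exact h.inv_rpow_minBeta_le hn j
    _ = _ := by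
        rw [prod_mul_distrib, prod_const, card_univ, Fintype.card_fin, invDistProd]
        ring

end IsAdmissible

end Exponents

section Positions

variable {V : Type*} {d : ℕ}

lemma sum_le_mul_harmonic_of_card_mul_le {f : V → ℝ} {K : ℝ} {S : Finset V}
    (hf : ∀ u ∈ S, 0 ≤ f u) (hK : ∀ t ∈ S, (#{u ∈ S | f t ≤ f u} : ℝ) * f t ≤ K) :
    ∑ u ∈ S, f u ≤ K * (harmonic #S : ℝ) := by
  classical
  induction S using Finset.induction_on_min_value f with
  | empty => simp
  | insert a s ha hmin ih =>
    have hfilter : {u ∈ insert a s | f a ≤ f u} = insert a s :=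
      filter_true_of_mem (forall_mem_insert _ _ _ |>.2 ⟨le_rfl, hmin⟩)
    have hfa : f a ≤ K * ((#s : ℝ) + 1)⁻¹ := by
      have := hK a (mem_insert_self a s)
      rw [hfilter, card_insert_of_notMem ha] at this
      push_cast at this
      rwa [← div_eq_mul_inv, le_div_iff₀' (by positivity)]
    have hsum : ∑ u ∈ s, f u ≤ K * (harmonic #s : ℝ) := by
      refine ih (fun u hu => hf u (mem_insert_of_mem hu)) fun t ht => ?_
      refine le_trans ?_ (hK t (mem_insert_of_mem ht))
      gcongr
      · exact hf t (mem_insert_of_mem ht)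
      · exact subset_insert a s
    rw [sum_insert ha, card_insert_of_notMem ha, harmonic_succ]
    push_cast
    linarith

lemma dist_torus_le_one (x y : Torus d) : dist x y ≤ 1 := by
  refine (dist_pi_le_iff zero_le_one).2 fun b => ?_
  rw [dist_eq_norm]
  have := AddCircle.norm_le_half_period (1 : ℝ) (x := x b - y b) one_ne_zero
  rw [abs_one] at this
  linarith

lemma volume_closedBall_torus (x : Torus d) {r : ℝ} (hr : 0 ≤ r) :
    volume (Metric.closedBall x r) = ENNReal.ofReal (min 1 (2 * r)) ^ d := by
  rw [volume_pi_closedBall _ hr]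
  simp only [AddCircle.volume_closedBall, prod_const, card_univ, Fintype.card_fin]

lemma card_mul_pow_le_of_lt_dist {S : Finset V} {x : V → Torus d} {z : Torus d} {r D : ℝ}
    (hr : 0 < r) (hr1 : r ≤ 1) (hD0 : 0 ≤ D)
    (hx : (S : Set V).Pairwise fun u v => r < dist (x u) (x v))
    (hD : ∀ u ∈ S, dist (x u) z ≤ D) : #S * r ^ d ≤ (2 * D + r) ^ d := by
  have hdisj : (S : Set V).PairwiseDisjoint fun u => Metric.closedBall (x u) (r / 2) :=
    fun u hu v hv huv => Metric.closedBall_disjoint_closedBall (by linarith [hx hu hv huv])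
  have hsubset : ⋃ u ∈ S, Metric.closedBall (x u) (r / 2) ⊆ Metric.closedBall z (D + r / 2) :=
    Set.iUnion₂_subset fun u hu => Metric.closedBall_subset_closedBall' (by linarith [hD u hu])
  have hvolume := measure_mono (μ := volume) hsubset
  rw [measure_biUnion_finset hdisj fun _ _ => Metric.isClosed_closedBall.measurableSet,
    volume_closedBall_torus _ (by positivity)] at hvolume
  simp only [volume_closedBall_torus _ (half_pos hr).le, mul_div_cancel₀ r two_ne_zero,
    min_eq_right hr1, sum_const, nsmul_eq_mul] at hvolume
  have := hvolume.trans (pow_le_pow_left' (ENNReal.ofReal_le_ofReal (min_le_right _ _)) d)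
  rw [← ENNReal.ofReal_pow hr.le, ← ENNReal.ofReal_pow (by positivity), ← ENNReal.ofReal_natCast,
    ← ENNReal.ofReal_mul (by positivity), ENNReal.ofReal_le_ofReal_iff (by positivity)] at this
  exact this.trans_eq (by ring)

lemma sum_inv_dist_pow_le [Fintype V] (hd : 1 ≤ d) {x : V → Torus d} {r : ℝ} (hr : 0 < r)
    (hx : Pairwise fun u v => r < dist (x u) (x v)) (v : V) :
    ∑ u, (dist (x v) (x u) ^ d)⁻¹ ≤ (3 / r) ^ d * (1 + Real.log (Fintype.card V)) := by
  classical
  have hd0 : d ≠ 0 := by positivity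
  have herase : ∑ u, (dist (x v) (x u) ^ d)⁻¹ = ∑ u ∈ univ.erase v, (dist (x v) (x u) ^ d)⁻¹ := by
    rw [← add_sum_erase _ _ (mem_univ v), dist_self, zero_pow hd0, inv_zero, zero_add]
  have hweak : ∀ t ∈ univ.erase v, (#{u ∈ univ.erase v | (dist (x v) (x t) ^ d)⁻¹ ≤
      (dist (x v) (x u) ^ d)⁻¹} : ℝ) * (dist (x v) (x t) ^ d)⁻¹ ≤ (3 / r) ^ d := by
    intro t ht
    have hvt : r < dist (x v) (x t) := hx (ne_of_mem_erase ht).symm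
    have hvt0 : 0 < dist (x v) (x t) := hr.trans hvt
    have hcard := card_mul_pow_le_of_lt_dist (z := x v) (D := dist (x v) (x t))
      (S := {u ∈ univ.erase v | (dist (x v) (x t) ^ d)⁻¹ ≤ (dist (x v) (x u) ^ d)⁻¹}) hr
      (hvt.le.trans (dist_torus_le_one _ _)) hvt0.le (fun _ _ _ _ huw => hx huw) fun u hu => by
        obtain ⟨huv, hu⟩ := mem_filter.1 hu
        have hvu : 0 < dist (x v) (x u) := hr.trans (hx (ne_of_mem_erase huv).symm)
        rw [inv_le_inv₀ (by positivity) (by positivity)] at hu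
        exact dist_comm (x u) (x v) ▸ le_of_pow_le_pow_left₀ hd0 hvt0.le hu
    rw [← div_eq_mul_inv, div_le_iff₀ (by positivity), ← mul_pow, div_mul_eq_mul_div, div_pow,
      le_div_iff₀ (by positivity)]
    exact hcard.trans (by gcongr; linarith)
  rw [herase]
  refine (sum_le_mul_harmonic_of_card_mul_le (fun _ _ => by positivity) hweak).trans ?_
  gcongr
  calc (harmonic #(univ.erase v) : ℝ) ≤ harmonic (Fintype.card V) := by
        have hcard : #(univ.erase v) ≤ Fintype.card V := card_erase_le
        exact_mod_cast sum_le_sum_of_subset_of_nonneg (range_mono hcard)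
          fun _ _ _ => by positivity
    _ ≤ 1 + Real.log (Fintype.card V) := harmonic_le_one_add_log _

lemma prod_one_add_sum_lt_snoc {k : ℕ} (g : V → V → ℝ) (v : Fin k → V) (u : V) :
    ∏ j, (1 + ∑ i with i < j, g (Fin.snoc (α := fun _ => V) v u i)
        (Fin.snoc (α := fun _ => V) v u j)) =
      (∏ j, (1 + ∑ i with i < j, g (v i) (v j))) * (1 + ∑ i, g (v i) u) := by
  simp only [sum_filter, Fin.prod_univ_castSucc, Fin.sum_univ_castSucc, Fin.snoc_castSucc,
    Fin.snoc_last, Fin.castSucc_lt_castSucc_iff, Fin.castSucc_lt_last, (Fin.le_last _).not_gt,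
    if_true, if_false, add_zero]

lemma sum_prod_one_add_sum_lt_le [Fintype V] {g : V → V → ℝ} (hg : ∀ u v, 0 ≤ g u v) {R : ℝ}
    (hR : 0 ≤ R) (hgR : ∀ u, ∑ v, g u v ≤ R) (k : ℕ) :
    ∑ v : Fin k → V, ∏ j, (1 + ∑ i with i < j, g (v i) (v j)) ≤
      (Fintype.card V + k * R) ^ k := by
  induction k with
  | zero => simp
  | succ k ih =>
    have hlast (v : Fin k → V) : ∑ u, (1 + ∑ i, g (v i) u) ≤ Fintype.card V + k * R := by
      rw [sum_add_distrib, sum_comm]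
      gcongr
      · simp
      · simpa using sum_le_sum fun i (_ : i ∈ univ) => hgR (v i)
    calc ∑ v : Fin (k + 1) → V, ∏ j, (1 + ∑ i with i < j, g (v i) (v j))
        = ∑ v : Fin k → V, (∏ j, (1 + ∑ i with i < j, g (v i) (v j))) *
            ∑ u, (1 + ∑ i, g (v i) u) := by
          rw [← (Fin.snocEquiv fun _ => V).sum_comp, Fintype.sum_prod_type_right]
          simp only [Finset.mul_sum, ← prod_one_add_sum_lt_snoc]
          rfl
      _ ≤ ∑ v : Fin k → V, (∏ j, (1 + ∑ i with i < j, g (v i) (v j))) *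
            (Fintype.card V + k * R) := by
          gcongr with v
          · exact prod_nonneg fun j _ => add_nonneg zero_le_one (sum_nonneg fun i _ => hg _ _)
          · exact hlast v
      _ ≤ (Fintype.card V + k * R) ^ k * (Fintype.card V + k * R) := by
          rw [← sum_mul]
          gcongr
      _ ≤ (Fintype.card V + (k + 1 : ℕ) * R) ^ (k + 1) := by
          rw [← pow_succ]
          gcongr
          exact k.le_succ

lemma sum_invDistProd_le [Fintype V] (hd : 1 ≤ d) {x : V → Torus d} {r : ℝ} (hr : 0 < r)
    (hx : Pairwise fun u v => r < dist (x u) (x v)) (k : ℕ) :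
    ∑ v : Fin k → V, invDistProd d (x ∘ v) ≤
      (Fintype.card V + k * ((3 / r) ^ d * (1 + Real.log (Fintype.card V)))) ^ k :=
  sum_prod_one_add_sum_lt_le (g := fun u v => (dist (x u) (x v) ^ d)⁻¹)
    (fun _ _ => by positivity) (by positivity) (sum_inv_dist_pow_le hd hr hx) k

end Positions

open scoped ProbabilityTheory ENNReal

section ProductMeasure

variable {ι κ α β : Type*} [Fintype ι] [MeasurableSpace α] [MeasurableSpace β]

lemma cond_prod (μ : Measure α) (ν : Measure β) [IsFiniteMeasure μ] [IsFiniteMeasure ν]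
    (s : Set α) (t : Set β) : (μ.prod ν)[|s ×ˢ t] = μ[|s].prod ν[|t] := by
  rw [ProbabilityTheory.cond, ProbabilityTheory.cond, ProbabilityTheory.cond,
    Measure.prod_smul_left, Measure.prod_smul_right, Measure.prod_restrict, smul_smul,
    Measure.prod_prod,
    ENNReal.mul_inv (.inr (measure_ne_top ν t)) (.inl (measure_ne_top μ s))]

lemma cond_pi (μ : ι → Measure α) [∀ i, IsFiniteMeasure (μ i)] {s : ι → Set α}
    (hs : ∀ i, MeasurableSet (s i)) :
    (Measure.pi μ)[|Set.univ.pi s] = Measure.pi fun i => (μ i)[|s i] := by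
  refine (Measure.pi_eq fun t _ => ?_).symm
  rw [ProbabilityTheory.cond_apply (MeasurableSet.univ_pi hs), ← Set.pi_inter_distrib,
    Measure.pi_pi, Measure.pi_pi,
    ENNReal.prod_inv_distrib fun _ _ j _ _ => .inr (measure_ne_top (μ j) (s j)),
    ← prod_mul_distrib]
  simp only [ProbabilityTheory.cond_apply (hs _)]

variable {μ : Measure α} [IsProbabilityMeasure μ]

lemma lintegral_pi_prod_comp_of_injective [Fintype κ] {v : κ → ι} (hv : v.Injective)
    {f : α → ℝ≥0∞} (hf : Measurable f) :
    ∫⁻ w, ∏ i, f (w (v i)) ∂(Measure.pi fun _ : ι => μ) = (∫⁻ x, f x ∂μ) ^ Fintype.card κ := by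
  have hindep := (ProbabilityTheory.iIndepFun_pi (μ := fun _ : ι => μ) (X := fun _ => f)
    fun _ => hf.aemeasurable).precomp hv
  rw [ProbabilityTheory.lintegral_prod_eq_prod_lintegral_of_indepFun univ _ hindep fun i =>
    hf.comp (measurable_pi_apply (v i))]
  simp only [(measurePreserving_eval (fun _ : ι => μ) _).lintegral_comp hf, prod_const, card_univ]

lemma pi_forall_mem_of_injOn {S : Finset κ} {e : κ → ι} (he : Set.InjOn e S) {A : κ → Set α}
    (hA : ∀ p, MeasurableSet (A p)) :
    Measure.pi (fun _ : ι => μ) {c | ∀ p ∈ S, c (e p) ∈ A p} = ∏ p ∈ S, μ (A p) := by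
  have hindep := (ProbabilityTheory.iIndepFun_pi (μ := fun _ : ι => μ) (X := fun _ => id)
    fun _ => aemeasurable_id).precomp (Set.injOn_iff_injective.1 he)
  have hprod := hindep.measure_inter_preimage_eq_mul univ (sets := fun p => A p) fun p _ => hA p
  rw [← prod_coe_sort]
  convert hprod using 2
  · ext c
    simp
  · exact ((measurePreserving_eval (fun _ : ι => μ) _).measure_preimage
      (hA _).nullMeasurableSet).symm

end ProductMeasure

section Randomness

variable {k n : ℕ}

instance : IsProbabilityMeasure ((volume : Measure ℝ).restrict (Set.Icc 0 1)) :=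
  ⟨by simp⟩

/-- The law of independent uniform `[0,1]` coins, one for each pair of vertices. -/
def coinMeasure (n : ℕ) : Measure (Sym2 (Fin n) → ℝ) :=
  Measure.pi fun _ => volume.restrict (Set.Icc 0 1)

instance : IsProbabilityMeasure (coinMeasure n) :=
  inferInstanceAs (IsProbabilityMeasure (Measure.pi _))

lemma coinMeasure_lt_eq_zero (e : Sym2 (Fin n)) {t : ℝ} (ht : 1 ≤ t) :
    coinMeasure n {c | t < c e} = 0 := by
  have hpreserving := measurePreserving_eval
    (fun _ : Sym2 (Fin n) => (volume : Measure ℝ).restrict (Set.Icc 0 1)) e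
  refine (hpreserving.measure_preimage measurableSet_Ioi.nullMeasurableSet).trans ?_
  rw [Measure.restrict_apply measurableSet_Ioi]
  refine measure_mono_null (fun r hr => ?_) measure_empty
  exact absurd (hr.2.2.trans ht) (not_le.2 hr.1)

lemma coinMeasure_forall_le {H : SimpleGraph (Fin k)} {v : Fin k → Fin n} (hv : v.Injective)
    (t : Fin k × Fin k → ℝ) :
    coinMeasure n {c | ∀ p ∈ edgePairs H, c s(v p.1, v p.2) ≤ t p} ≤
      ∏ p ∈ edgePairs H, ENNReal.ofReal (t p) := by
  have hinj : Set.InjOn (fun p : Fin k × Fin k => s(v p.1, v p.2)) (edgePairs H) := by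
    intro p hp q hq hpq
    rcases Sym2.eq_iff.1 hpq with ⟨h1, h2⟩ | ⟨h1, h2⟩
    · exact Prod.ext (hv h1) (hv h2)
    · have hp' := (mem_edgePairs.1 hp).1
      rw [hv h1, hv h2] at hp'
      exact absurd hp' (mem_edgePairs.1 hq).1.asymm
  refine (pi_forall_mem_of_injOn (A := fun p => Set.Iic (t p)) hinj
    fun _ => measurableSet_Iic).trans_le ?_
  gcongr with p
  rw [Measure.restrict_apply measurableSet_Iic]
  calc volume (Set.Iic (t p) ∩ Set.Icc 0 1) ≤ volume (Set.Icc 0 (t p)) :=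
        measure_mono fun r hr => ⟨hr.2.1, hr.1⟩
    _ = ENNReal.ofReal (t p) := by rw [Real.volume_Icc, sub_zero]

end Randomness

section Copies

variable {k d n : ℕ} {γ m : ℝ}

/-- The event that the tuple `v` of distinct vertices spans a copy of `H`, induced or not according
to `s`. -/
def copyEvent (s : StarKind) (H : SimpleGraph (Fin k)) (γ m : ℝ) (d n : ℕ) (v : Fin k → Fin n) :
    Set (GirgΩ d n) :=
  {ω | v.Injective ∧ match s with
    | .sub => ∀ i j, H.Adj i j → girgEdge γ m d n ω (v i) (v j)
    | .ind => ∀ i j, i ≠ j → (H.Adj i j ↔ girgEdge γ m d n ω (v i) (v j))}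

lemma measurable_girgEdge (u v : Fin n) :
    Measurable fun ω : GirgΩ d n => girgEdge γ m d n ω u v := by
  have hconn : Measurable fun ω : GirgΩ d n => connProb γ m d n ω.1 ω.2.1 u v := by
    unfold connProb
    fun_prop
  exact measurable_const.and (measurableSet_le (by fun_prop) hconn).mem

lemma measurableSet_copyEvent (s : StarKind) (H : SimpleGraph (Fin k)) (v : Fin k → Fin n) :
    MeasurableSet (copyEvent s H γ m d n v) := by
  refine measurableSet_setOfPred.2 (measurable_const.and ?_)
  cases s with
  | sub =>
    exact .forall fun i => .forall fun j => measurable_const.imp (measurable_girgEdge (v i) (v j))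
  | ind =>
    exact .forall fun i => .forall fun j =>
      measurable_const.imp (measurable_const.iff (measurable_girgEdge (v i) (v j)))

lemma starNTotal_eq_sum_indicator (s : StarKind) (H : SimpleGraph (Fin k)) (ω : GirgΩ d n) :
    (starNTotal s H γ m d n ω : ℝ≥0∞) = ∑ v, (copyEvent s H γ m d n v).indicator 1 ω := by
  classical
  have hncard : starNTotal s H γ m d n ω = {v | ω ∈ copyEvent s H γ m d n v}.ncard := by
    cases s <;> rfl
  rw [hncard, Set.ncard_eq_toFinset_card', Set.toFinset_ofPred, card_filter]
  push_cast
  rfl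

lemma lintegral_starNTotal (s : StarKind) (H : SimpleGraph (Fin k))
    (P : Measure (GirgΩ d n)) :
    ∫⁻ ω, (starNTotal s H γ m d n ω : ℝ≥0∞) ∂P = ∑ v, P (copyEvent s H γ m d n v) := by
  have hmeas (v : Fin k → Fin n) := measurableSet_copyEvent (d := d) (γ := γ) (m := m) s H v
  simp only [starNTotal_eq_sum_indicator]
  rw [lintegral_finsetSum _ fun v _ => measurable_one.indicator (hmeas v)]
  simp only [lintegral_indicator_one (hmeas _)]

/-- Configurations of vertices with all distances larger than `r`. -/
def separatedConfigs (d n : ℕ) (r : ℝ) : Set (Fin n → Torus d) :=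
  {x | Pairwise fun u v => r < dist (x u) (x v)}

lemma measurableSet_separatedConfigs (r : ℝ) : MeasurableSet (separatedConfigs d n r) := by
  have hmeas (u v : Fin n) : Measurable fun x : Fin n → Torus d => r < dist (x u) (x v) :=
    (measurableSet_lt measurable_const
      ((measurable_pi_apply u).dist (measurable_pi_apply v))).mem
  exact measurableSet_setOfPred.2 <|
    .forall fun u => .forall fun v => measurable_const.imp (hmeas u v)

lemma cutoffEvent_eq_prod (τ ε : ℝ) (d n : ℕ) :
    cutoffEvent τ ε d n = (Set.univ.pi fun _ => Set.Iio ((n : ℝ) ^ (1 / (τ - 1)) / ε)) ×ˢ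
      (separatedConfigs d n (ε * (n : ℝ) ^ (-(1 / (d : ℝ)))) ×ˢ Set.univ) := by
  ext ω
  simp [cutoffEvent, separatedConfigs, Pairwise]

theorem cond_girgMeasure_cutoffEvent (μW : Measure ℝ) [IsFiniteMeasure μW] (τ ε : ℝ) (d n : ℕ) :
    (girgMeasure μW d n)[|cutoffEvent τ ε d n] =
      (Measure.pi fun _ => μW[|Set.Iio ((n : ℝ) ^ (1 / (τ - 1)) / ε)]).prod
        ((Measure.pi fun _ => volume)[|separatedConfigs d n (ε * (n : ℝ) ^ (-(1 / (d : ℝ))))].prod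
          (coinMeasure n)) := by
  rw [girgMeasure, ← coinMeasure, cutoffEvent_eq_prod, cond_prod, cond_prod,
    ProbabilityTheory.cond_univ, cond_pi _ fun _ => measurableSet_Iio]

end Copies

section CopyProbability

variable {k d n : ℕ} {τ γ m ε : ℝ} {w : Fin n → ℝ} {x : Fin n → Torus d} {v : Fin k → Fin n}

lemma one_le_connProb {u u' : Fin n} (hγ : 0 ≤ γ) (hpos : 0 < n * m * dist (x u) (x u') ^ d)
    (h : n * m * dist (x u) (x u') ^ d ≤ w u * w u') : 1 ≤ connProb γ m d n w x u u' :=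
  le_min le_rfl (Real.one_le_rpow ((one_le_div hpos).2 h) hγ)

lemma coinMeasure_copyEvent_le (s : StarKind) (H : SimpleGraph (Fin k)) (hv : v.Injective) :
    coinMeasure n {c | (w, x, c) ∈ copyEvent s H γ m d n v} ≤
      ∏ p ∈ edgePairs H, ENNReal.ofReal (connProb γ m d n w x (v p.1) (v p.2)) := by
  refine (measure_mono fun c hc => ?_).trans
    (coinMeasure_forall_le hv fun p => connProb γ m d n w x (v p.1) (v p.2))
  intro p hp
  obtain ⟨hlt, hadj⟩ := mem_edgePairs.1 hp
  cases s with
  | sub => exact (hc.2 p.1 p.2 hadj).2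
  | ind => exact ((hc.2 p.1 p.2 hlt.ne).1 hadj).2

lemma coinMeasure_copyEvent_ind_eq_zero {H : SimpleGraph (Fin k)} (hv : v.Injective) {i j : Fin k}
    (hij : i ≠ j) (hadj : ¬H.Adj i j) (hconn : 1 ≤ connProb γ m d n w x (v i) (v j)) :
    coinMeasure n {c | (w, x, c) ∈ copyEvent .ind H γ m d n v} = 0 := by
  refine measure_mono_null (fun c hc => ?_) (coinMeasure_lt_eq_zero s(v i, v j) hconn)
  exact not_le.1 fun hle => hadj ((hc.2 i j hij).2 ⟨hv.ne hij, hle⟩)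

theorem exists_coinMeasure_copyEvent_le (hd : 1 ≤ d) (hτ : 1 < τ) (hγ : 0 ≤ γ) (hm : 0 < m)
    (hε : 0 < ε) (H : SimpleGraph (Fin k)) (s : StarKind) :
    ∃ C, 0 ≤ C ∧ ∀ (n : ℕ) (w : Fin n → ℝ) (x : Fin n → Torus d) (v : Fin k → Fin n), 1 < n →
      IsAdmissible τ ε d n w x → v.Injective →
        coinMeasure n {c | (w, x, c) ∈ copyEvent s H γ m d n v} ≤
          ENNReal.ofReal (C * (n : ℝ) ^ (starOptVal s τ γ d H - k) * (∏ i, w (v i) ^ (τ - 1)) *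
            invDistProd d (x ∘ v)) := by
  set a := max 1 (max ε⁻¹ (m * k ^ d))
  have ha : 1 ≤ a := le_max_left _ _
  have hεa : 1 ≤ ε * a := by
    rw [← mul_inv_cancel₀ hε.ne']
    gcongr
    exact (le_max_left _ _).trans (le_max_right _ _)
  refine ⟨(max 1 (a ^ (d + 2) / m) ^ γ) ^ #(edgePairs H) * (k ^ d) ^ k, by positivity,
    fun n w x v hn h hv => ?_⟩
  have hn1 : (1 : ℝ) < n := by exact_mod_cast hn
  by_cases hind : s = .ind → ∀ i j, i < j → ¬H.Adj i j →
      w (v i) * w (v j) ≤ n * m * dist (x (v i)) (x (v j)) ^ d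
  · refine (coinMeasure_copyEvent_le s H hv).trans ?_
    rw [← ENNReal.ofReal_prod_of_nonneg]
    · exact ENNReal.ofReal_le_ofReal <| (h.comp hv).prod_min_one_ratio_rpow_le H s hd hτ hγ hn1 hm
        ha hεa ((le_max_right _ _).trans (le_max_right _ _)) hind
    · intro p _
      have hw (u : Fin n) : 0 ≤ w u := zero_le_one.trans (h.one_le_weight u)
      exact le_min zero_le_one (Real.rpow_nonneg
        (div_nonneg (mul_nonneg (hw _) (hw _)) (by positivity)) _)
  · push Not at hind
    obtain ⟨rfl, i, j, hij, hadj, hlt⟩ := hind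
    have hdist : 0 < dist (x (v i)) (x (v j)) := (h.comp hv).dist_pos hn1 hij.ne
    have hpos : 0 < n * m * dist (x (v i)) (x (v j)) ^ d := by positivity
    exact (coinMeasure_copyEvent_ind_eq_zero hv hij.ne hadj
      (one_le_connProb hγ hpos hlt.le)).trans_le zero_le

end CopyProbability

section ExpectedCount

variable {k d n : ℕ} {τ γ m ε : ℝ} {μW : Measure ℝ}

lemma invDistProd_nonneg {Y : Type*} [PseudoMetricSpace Y] (y : Fin k → Y) :
    0 ≤ invDistProd d y :=
  prod_nonneg fun _ _ => add_nonneg zero_le_one (sum_nonneg fun _ _ => by positivity)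

lemma measurable_invDistProd_comp (v : Fin k → Fin n) :
    Measurable fun x : Fin n → Torus d => ENNReal.ofReal (invDistProd d (x ∘ v)) := by
  have hdist (i j : Fin k) : Measurable fun x : Fin n → Torus d => dist (x (v i)) (x (v j)) :=
    (measurable_pi_apply (v i)).dist (measurable_pi_apply (v j))
  exact (Finset.measurable_prod _ fun j _ => measurable_const.add <|
    Finset.measurable_sum _ fun i _ => ((hdist i j).pow_const d).inv).ennreal_ofReal

lemma ae_isAdmissible (hW : ∀ᵐ t ∂μW, 1 ≤ t) :
    ∀ᵐ w ∂(Measure.pi fun _ : Fin n => μW[|Set.Iio ((n : ℝ) ^ (1 / (τ - 1)) / ε)]),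
      ∀ᵐ x ∂(Measure.pi fun _ : Fin n => (volume : Measure (Torus d)))[|separatedConfigs d n
        (ε * (n : ℝ) ^ (-(1 / (d : ℝ))))], IsAdmissible τ ε d n w x := by
  have hpositions := ProbabilityTheory.ae_cond_mem
    (μ := Measure.pi fun _ : Fin n => (volume : Measure (Torus d)))
    (measurableSet_separatedConfigs (d := d) (n := n) (ε * (n : ℝ) ^ (-(1 / (d : ℝ)))))
  have hweight : ∀ᵐ t ∂μW[|Set.Iio ((n : ℝ) ^ (1 / (τ - 1)) / ε)],
      1 ≤ t ∧ t < n ^ (1 / (τ - 1)) / ε :=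
    (hW.filter_mono ProbabilityTheory.cond_absolutelyContinuous.ae_le).and
      (ProbabilityTheory.ae_cond_mem measurableSet_Iio)
  have hweights : ∀ᵐ w ∂(Measure.pi fun _ : Fin n =>
      μW[|Set.Iio ((n : ℝ) ^ (1 / (τ - 1)) / ε)]), ∀ i, 1 ≤ w i ∧ w i < n ^ (1 / (τ - 1)) / ε :=
    ae_all_iff.2 fun i => (Measure.tendsto_eval_ae_ae
      (μ := fun _ => μW[|Set.Iio ((n : ℝ) ^ (1 / (τ - 1)) / ε)]) (i := i)).eventually hweight
  filter_upwards [hweights] with w hw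
  filter_upwards [hpositions] with x hx
  exact ⟨fun i => (hw i).1, fun i => (hw i).2, fun hij => hx hij, fun _ _ => dist_torus_le_one _ _⟩

variable [IsProbabilityMeasure μW]

lemma cond_copyEvent_le (hW : ∀ᵐ t ∂μW, 1 ≤ t)
    (hM : μW (Set.Iio ((n : ℝ) ^ (1 / (τ - 1)) / ε)) ≠ 0) {s : StarKind} {H : SimpleGraph (Fin k)}
    {v : Fin k → Fin n} (hv : v.Injective) {A : ℝ} (hA : 0 ≤ A)
    (hcoin : ∀ w x, IsAdmissible τ ε d n w x →
      coinMeasure n {c | (w, x, c) ∈ copyEvent s H γ m d n v} ≤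
        ENNReal.ofReal (A * (∏ i, w (v i) ^ (τ - 1)) * invDistProd d (x ∘ v))) :
    (girgMeasure μW d n)[|cutoffEvent τ ε d n] (copyEvent s H γ m d n v) ≤
      ENNReal.ofReal A *
        (∫⁻ t, ENNReal.ofReal (t ^ (τ - 1)) ∂μW[|Set.Iio ((n : ℝ) ^ (1 / (τ - 1)) / ε)]) ^ k *
        ∫⁻ x, ENNReal.ofReal (invDistProd d (x ∘ v))
          ∂(Measure.pi fun _ => volume)[|separatedConfigs d n
            (ε * (n : ℝ) ^ (-(1 / (d : ℝ))))] := by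
  have := ProbabilityTheory.cond_isProbabilityMeasure hM
  have hmeas := measurableSet_copyEvent (d := d) (γ := γ) (m := m) s H v
  have hrpow : Measurable fun t : ℝ => ENNReal.ofReal (t ^ (τ - 1)) := by fun_prop
  have hfactor (w : Fin n → ℝ) (x : Fin n → Torus d) (h : IsAdmissible τ ε d n w x) :
      coinMeasure n {c | (w, x, c) ∈ copyEvent s H γ m d n v} ≤ ENNReal.ofReal A *
        (∏ i, ENNReal.ofReal (w (v i) ^ (τ - 1))) * ENNReal.ofReal (invDistProd d (x ∘ v)) := by
    have hw (i : Fin k) : 0 ≤ w (v i) ^ (τ - 1) :=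
      Real.rpow_nonneg (zero_le_one.trans (h.one_le_weight _)) _
    rw [← ENNReal.ofReal_prod_of_nonneg fun i _ => hw i, ← ENNReal.ofReal_mul hA,
      ← ENNReal.ofReal_mul (mul_nonneg hA (prod_nonneg fun i _ => hw i))]
    exact hcoin w x h
  rw [cond_girgMeasure_cutoffEvent, Measure.prod_apply hmeas]
  simp only [Measure.prod_apply (measurable_prodMk_left hmeas)]
  set I := ∫⁻ x, ENNReal.ofReal (invDistProd d (x ∘ v)) ∂(Measure.pi fun _ => volume)[|
    separatedConfigs d n (ε * (n : ℝ) ^ (-(1 / (d : ℝ))))] with hI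
  refine (lintegral_mono_ae (g := fun w =>
    ENNReal.ofReal A * (∏ i, ENNReal.ofReal (w (v i) ^ (τ - 1))) * I) ?_).trans_eq ?_
  · filter_upwards [ae_isAdmissible hW] with w hw
    rw [hI, ← lintegral_const_mul _ (measurable_invDistProd_comp v)]
    exact lintegral_mono_ae (hw.mono fun x => hfactor w x)
  · rw [lintegral_mul_const _ (by fun_prop), lintegral_const_mul _ (by fun_prop),
      lintegral_pi_prod_comp_of_injective hv hrpow, Fintype.card_fin]

lemma sum_lintegral_invDistProd_le (hd : 1 ≤ d) {r : ℝ} (hr : 0 < r) :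
    ∑ v : Fin k → Fin n, ∫⁻ x, ENNReal.ofReal (invDistProd d (x ∘ v))
        ∂(Measure.pi fun _ => volume)[|separatedConfigs d n r] ≤
      ENNReal.ofReal ((n + k * ((3 / r) ^ d * (1 + Real.log n))) ^ k) := by
  rw [← lintegral_finsetSum _ fun v _ => measurable_invDistProd_comp v]
  calc ∫⁻ x, ∑ v : Fin k → Fin n, ENNReal.ofReal (invDistProd d (x ∘ v))
        ∂(Measure.pi fun _ => volume)[|separatedConfigs d n r]
      ≤ ∫⁻ _, ENNReal.ofReal ((n + k * ((3 / r) ^ d * (1 + Real.log n))) ^ k)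
          ∂(Measure.pi fun _ : Fin n => (volume : Measure (Torus d)))[|separatedConfigs d n r] := by
        refine lintegral_mono_ae ?_
        filter_upwards [ProbabilityTheory.ae_cond_mem (measurableSet_separatedConfigs r)] with x hx
        rw [← ENNReal.ofReal_sum_of_nonneg fun v _ => invDistProd_nonneg _]
        simpa only [Fintype.card_fin] using
          ENNReal.ofReal_le_ofReal (sum_invDistProd_le hd hr hx k)
    _ ≤ ENNReal.ofReal ((n + k * ((3 / r) ^ d * (1 + Real.log n))) ^ k) := by
        rw [lintegral_const]
        exact mul_le_of_le_one_right zero_le prob_le_one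

theorem exists_lintegral_starNTotal_le (hd : 1 ≤ d) (hτ : 1 < τ) (hγ : 0 ≤ γ) (hm : 0 < m)
    (hε : 0 < ε) (hW : ∀ᵐ t ∂μW, 1 ≤ t) (H : SimpleGraph (Fin k)) (s : StarKind) :
    ∃ C, 0 ≤ C ∧ ∀ n : ℕ, 1 < n → μW (Set.Iio ((n : ℝ) ^ (1 / (τ - 1)) / ε)) ≠ 0 →
      ∫⁻ ω, (starNTotal s H γ m d n ω : ℝ≥0∞) ∂(girgMeasure μW d n)[|cutoffEvent τ ε d n] ≤
        ENNReal.ofReal (C * (n : ℝ) ^ (starOptVal s τ γ d H - k)) *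
        (∫⁻ t, ENNReal.ofReal (t ^ (τ - 1)) ∂μW[|Set.Iio ((n : ℝ) ^ (1 / (τ - 1)) / ε)]) ^ k *
        ENNReal.ofReal ((n + k * ((3 / ε) ^ d * n * (1 + Real.log n))) ^ k) := by
  obtain ⟨C, hC, hcoin⟩ := exists_coinMeasure_copyEvent_le hd hτ hγ hm hε H s
  refine ⟨C, hC, fun n hn hM => ?_⟩
  set r := ε * (n : ℝ) ^ (-(1 / (d : ℝ))) with hr
  have hr0 : 0 < r := by positivity
  have hrpow : (3 / r) ^ d = (3 / ε) ^ d * n := by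
    have hroot : ((n : ℝ) ^ (1 / (d : ℝ))) ^ d = n := by
      rw [one_div, Real.rpow_inv_natCast_pow n.cast_nonneg (by positivity)]
    rw [hr, Real.rpow_neg n.cast_nonneg, ← div_div, div_inv_eq_mul, mul_pow, hroot]
  rw [lintegral_starNTotal, ← hrpow]
  refine le_trans ?_ (mul_le_mul_right (sum_lintegral_invDistProd_le hd hr0) _)
  rw [Finset.mul_sum]
  gcongr with v
  by_cases hv : v.Injective
  · exact cond_copyEvent_le hW hM hv (by positivity) fun w x h => hcoin n w x v hn h hv
  · rw [show copyEvent s H γ m d n v = ∅ from Set.eq_empty_of_forall_notMem fun _ h => hv h.1,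
      measure_empty]
    exact zero_le

end ExpectedCount

section Moments

variable {μ : Measure ℝ}

lemma lintegral_cond_Iio_rpow_le (hμ : ∀ᵐ t ∂μ, 0 < t) {η : ℝ} (hη : 0 ≤ η) (M p : ℝ) :
    ∫⁻ t, ENNReal.ofReal (t ^ p) ∂μ[|Set.Iio M] ≤
      (μ (Set.Iio M))⁻¹ * (ENNReal.ofReal (M ^ η) * ∫⁻ t, ENNReal.ofReal (t ^ (p - η)) ∂μ) := by
  have hle : ∀ᵐ t ∂μ.restrict (Set.Iio M),
      ENNReal.ofReal (t ^ p) ≤ ENNReal.ofReal (M ^ η) * ENNReal.ofReal (t ^ (p - η)) := by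
    filter_upwards [ae_restrict_of_ae hμ, ae_restrict_mem measurableSet_Iio] with t ht htM
    rw [← ENNReal.ofReal_mul (Real.rpow_nonneg (ht.trans htM).le _)]
    refine ENNReal.ofReal_le_ofReal ?_
    calc t ^ p = t ^ η * t ^ (p - η) := by rw [← Real.rpow_add ht, add_sub_cancel]
      _ ≤ M ^ η * t ^ (p - η) := by gcongr; exact le_of_lt htM
  rw [ProbabilityTheory.cond, lintegral_smul_measure, smul_eq_mul,
    ← lintegral_const_mul (μ := μ) _ (by fun_prop)]
  exact mul_le_mul_right ((lintegral_mono_ae hle).trans (setLIntegral_le_lintegral _ _)) _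

lemma lintegral_cond_Iio_rpow_le_ofReal (hμ : ∀ᵐ t ∂μ, 0 < t) {η M p : ℝ} (hη : 0 ≤ η)
    (hmoment : Integrable (fun t => t ^ (p - η)) μ) (hM : 2⁻¹ ≤ μ (Set.Iio M)) :
    ∫⁻ t, ENNReal.ofReal (t ^ p) ∂μ[|Set.Iio M] ≤
      ENNReal.ofReal (2 * (M ^ η * ∫ t, t ^ (p - η) ∂μ)) := by
  refine (lintegral_cond_Iio_rpow_le hμ hη M p).trans ?_
  have hnonneg : ∀ᵐ t ∂μ, 0 ≤ t ^ (p - η) := hμ.mono fun t ht => Real.rpow_nonneg ht.le _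
  rw [ENNReal.ofReal_mul zero_le_two, ENNReal.ofReal_mul' (integral_nonneg_of_ae hnonneg),
    ofReal_integral_eq_lintegral_ofReal hmoment hnonneg]
  gcongr
  simpa using ENNReal.inv_le_inv' hM

lemma tendsto_measure_Iio_atTop : Tendsto (fun M => μ (Set.Iio M)) atTop (nhds (μ Set.univ)) := by
  refine tendsto_of_tendsto_of_tendsto_of_le_of_le
    ((tendsto_measure_Iic_atTop μ).comp (tendsto_atTop_add_const_right _ (-1) tendsto_id))
    tendsto_const_nhds (fun M => measure_mono fun t ht => ?_)
    fun _ => measure_mono (Set.subset_univ _)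
  exact lt_of_le_of_lt ht (add_lt_of_neg_right M neg_one_lt_zero)

lemma integrable_rpow_of_isBigO_tail [IsFiniteMeasure μ] (hμ : ∀ᵐ t ∂μ, 0 ≤ t) {p q : ℝ}
    (htail : (fun t => μ.real (Set.Ioi t)) =O[atTop] fun t : ℝ => t ^ (-q)) (hp : 0 < p)
    (hpq : p < q) : Integrable (fun t => t ^ p) μ := by
  have hanti : Antitone fun t => μ.real (Set.Ioi t) := fun _ _ h =>
    measureReal_mono (Set.Ioi_subset_Ioi h)
  have hbounded : (fun t => μ.real (Set.Ioi t)) =O[nhdsWithin 0 (Set.Ioi 0)]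
      fun t : ℝ => t ^ (-(0 : ℝ)) := by
    refine .of_bound (μ.real Set.univ) (.of_forall fun t => ?_)
    simpa [abs_of_nonneg] using measureReal_mono (μ := μ) (Set.subset_univ (Set.Ioi t))
  have hlayer : IntegrableOn (fun t => t ^ (p - 1) * μ.real (Set.Ioi t)) (Set.Ioi 0) :=
    mellin_convergent_of_isBigO_scalar (hanti.locallyIntegrable.locallyIntegrableOn _)
      htail hpq hbounded hp
  refine ⟨by fun_prop, ?_⟩
  rw [hasFiniteIntegral_iff_ofReal (hμ.mono fun t ht => Real.rpow_nonneg ht p),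
    lintegral_rpow_eq_lintegral_meas_lt_mul μ hμ aemeasurable_id hp]
  refine ENNReal.mul_lt_top ENNReal.ofReal_lt_top ?_
  refine (setLIntegral_congr_fun measurableSet_Ioi fun t ht => ?_).trans_lt hlayer.lintegral_lt_top
  rw [ENNReal.ofReal_mul (Real.rpow_nonneg (le_of_lt ht) _), ofReal_measureReal, mul_comm]
  rfl

namespace WeightTail

variable {τ c : ℝ}

lemma ae_one_le (hW : WeightTail τ c μ) : ∀ᵐ t ∂μ, 1 ≤ t := by
  simpa only [Set.mem_Iio, not_lt] using measure_eq_zero_iff_ae_notMem.1 hW.2.1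

lemma isBigO_tail (hW : WeightTail τ c μ) :
    (fun t => μ.real (Set.Ioi t)) =O[atTop] fun t : ℝ => t ^ (-(τ - 1)) := by
  have hne : ∀ᶠ t : ℝ in atTop, c * t ^ (1 - τ) ≠ 0 := by
    filter_upwards [eventually_gt_atTop 0] with t ht
    exact mul_ne_zero hW.1.ne' (Real.rpow_pos_of_pos ht _).ne'
  have hequiv := (Asymptotics.isEquivalent_iff_tendsto_one hne).2 hW.2.2
  rw [neg_sub]
  exact hequiv.isBigO.trans (Asymptotics.isBigO_const_mul_self c _ _)

lemma integrable_rpow [IsFiniteMeasure μ] (hW : WeightTail τ c μ) {p : ℝ} (hp : p < τ - 1) :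
    Integrable (fun t => t ^ p) μ := by
  rcases le_or_gt p 0 with hp0 | hp0
  · refine (integrable_const (1 : ℝ)).mono' (by fun_prop) ?_
    filter_upwards [hW.ae_one_le] with t ht
    rw [Real.norm_of_nonneg (Real.rpow_nonneg (zero_le_one.trans ht) p)]
    exact Real.rpow_le_one_of_one_le_of_nonpos ht hp0
  · exact integrable_rpow_of_isBigO_tail (hW.ae_one_le.mono fun t ht => zero_le_one.trans ht)
      hW.isBigO_tail hp0 hp

lemma wMean_pos [IsProbabilityMeasure μ] (hW : WeightTail τ c μ) (hτ : 2 < τ) : 0 < wMean μ := by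
  have hint : Integrable (fun t => t) μ := by
    simpa only [Real.rpow_one] using hW.integrable_rpow (p := 1) (by linarith)
  have hmean : ∫ _, (1 : ℝ) ∂μ ≤ ∫ t, t ∂μ :=
    integral_mono_ae (integrable_const 1) hint hW.ae_one_le
  rw [integral_const, probReal_univ, one_smul] at hmean
  exact one_pos.trans_le hmean

end WeightTail

end Moments

section Asymptotics

variable {k d : ℕ} {τ γ m ε η : ℝ} {μW : Measure ℝ} [IsProbabilityMeasure μW]

lemma isBigO_add_mul_one_add_log (A : ℝ) (hη : 0 < η) :
    (fun x : ℝ => x + A * x * (1 + Real.log x)) =O[atTop] fun x => x ^ (1 + η) := by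
  have hone : (fun _ : ℝ => (1 : ℝ)) =O[atTop] fun x => x ^ η :=
    .of_bound 1 <| by
      filter_upwards [eventually_ge_atTop 1] with x hx
      simpa [abs_of_nonneg (Real.rpow_nonneg (zero_le_one.trans hx) η)] using
        Real.one_le_rpow hx hη.le
  have hlog : (fun x => 1 + A * (1 + Real.log x)) =O[atTop] fun x => x ^ η :=
    hone.add ((hone.add (isLittleO_log_rpow_atTop hη).isBigO).const_mul_left A)
  refine ((Asymptotics.isBigO_refl (fun x : ℝ => x) atTop).mul hlog).congr' ?_ ?_
  · exact .of_forall fun x => by ring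
  · filter_upwards [eventually_gt_atTop 0] with x hx
    rw [Real.rpow_add hx, Real.rpow_one]

lemma isBigO_integral_starNTotal (hd : 1 ≤ d) (hτ : 1 < τ) (hγ : 0 ≤ γ) (hm : 0 < m) (hε : 0 < ε)
    (hW : ∀ᵐ t ∂μW, 1 ≤ t) (hη : 0 ≤ η) (hmoment : Integrable (fun t => t ^ (τ - 1 - η)) μW)
    (H : SimpleGraph (Fin k)) (s : StarKind) :
    (fun n : ℕ => ∫ ω, (starNTotal s H γ m d n ω : ℝ) ∂(girgMeasure μW d n)[|cutoffEvent τ ε d n])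
      =O[atTop] fun n : ℕ => (n : ℝ) ^ (starOptVal s τ γ d H - k) *
        (((n : ℝ) ^ (1 / (τ - 1)) / ε) ^ η) ^ k *
        (n + k * (3 / ε) ^ d * n * (1 + Real.log n)) ^ k := by
  obtain ⟨C, hC, hbound⟩ := exists_lintegral_starNTotal_le hd hτ hγ hm hε hW H s
  set q := ∫ t, t ^ (τ - 1 - η) ∂μW
  have hpos : ∀ᵐ t ∂μW, 0 < t := hW.mono fun t ht => one_pos.trans_le ht
  have hq : 0 ≤ q := integral_nonneg_of_ae (hpos.mono fun t ht => Real.rpow_nonneg ht.le _)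
  have hcutoff : Tendsto (fun n : ℕ => (n : ℝ) ^ (1 / (τ - 1)) / ε) atTop atTop :=
    ((tendsto_rpow_atTop (one_div_pos.2 (sub_pos.2 hτ))).comp
      tendsto_natCast_atTop_atTop).atTop_div_const hε
  have hhalf : ∀ᶠ n : ℕ in atTop, 2⁻¹ ≤ μW (Set.Iio ((n : ℝ) ^ (1 / (τ - 1)) / ε)) :=
    (tendsto_measure_Iio_atTop.comp hcutoff).eventually_const_le (by simp)
  refine .of_bound (C * (2 * q) ^ k) ?_
  filter_upwards [hhalf, eventually_gt_atTop 1] with n hn hn1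
  set M := (n : ℝ) ^ (1 / (τ - 1)) / ε
  rw [Real.norm_of_nonneg (r := _ * _) (by positivity),
    ← ENNReal.ofReal_le_ofReal_iff (by positivity), ofReal_norm]
  calc _ ≤ ∫⁻ ω, (starNTotal s H γ m d n ω : ℝ≥0∞)
          ∂(girgMeasure μW d n)[|cutoffEvent τ ε d n] := by
        simpa only [Real.enorm_natCast] using enorm_integral_le_lintegral_enorm
          (μ := (girgMeasure μW d n)[|cutoffEvent τ ε d n])
          fun ω => (starNTotal s H γ m d n ω : ℝ)
    _ ≤ _ := hbound n hn1 (ENNReal.inv_pos.2 ENNReal.ofNat_ne_top |>.trans_le hn).ne'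
    _ ≤ ENNReal.ofReal (C * (n : ℝ) ^ (starOptVal s τ γ d H - k)) *
          ENNReal.ofReal (2 * (M ^ η * q)) ^ k *
          ENNReal.ofReal ((n + k * ((3 / ε) ^ d * n * (1 + Real.log n))) ^ k) := by
        gcongr
        exact lintegral_cond_Iio_rpow_le_ofReal hpos hη hmoment hn
    _ = _ := by
        rw [← ENNReal.ofReal_pow (by positivity), ← ENNReal.ofReal_mul (by positivity),
          ← ENNReal.ofReal_mul (by positivity)]
        congr 1
        ring

lemma isBigO_integral_starNTotal_rpow (hd : 1 ≤ d) (hτ : 1 < τ) (hγ : 0 ≤ γ) (hm : 0 < m)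
    (hε : 0 < ε) (hW : ∀ᵐ t ∂μW, 1 ≤ t) (hmoment : ∀ p < τ - 1, Integrable (fun t => t ^ p) μW)
    (H : SimpleGraph (Fin k)) (s : StarKind) {δ : ℝ} (hδ : 0 < δ) :
    (fun n : ℕ => ∫ ω, (starNTotal s H γ m d n ω : ℝ) ∂(girgMeasure μW d n)[|cutoffEvent τ ε d n])
      =O[atTop] fun n : ℕ => (n : ℝ) ^ (starOptVal s τ γ d H + δ) := by
  obtain ⟨η, hη, hηδ⟩ : ∃ η > 0, 1 / (τ - 1) * η * k + η * k ≤ δ := by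
    have := one_div_pos.2 (sub_pos.2 hτ)
    refine ⟨δ / ((1 / (τ - 1) + 1) * (k + 1)), by positivity, ?_⟩
    rw [← add_mul, ← add_one_mul, mul_div, mul_div_mul_left _ _ (by positivity), div_mul_eq_mul_div,
      div_le_iff₀ (by positivity)]
    linarith
  have hweights : (fun n : ℕ => ((n : ℝ) ^ (1 / (τ - 1)) / ε) ^ η) =O[atTop]
      fun n : ℕ => (n : ℝ) ^ (1 / (τ - 1) * η) := by
    refine .of_bound (ε ^ η)⁻¹ (.of_forall fun n => ?_)
    rw [Real.div_rpow (by positivity) hε.le, ← Real.rpow_mul n.cast_nonneg, div_eq_inv_mul,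
      norm_mul, Real.norm_of_nonneg (by positivity)]
  have hpositions := (isBigO_add_mul_one_add_log (k * (3 / ε) ^ d) hη).comp_tendsto
    tendsto_natCast_atTop_atTop
  refine (isBigO_integral_starNTotal hd hτ hγ hm hε hW hη.le (hmoment _ (by linarith)) H s).trans
    ((((Asymptotics.isBigO_refl _ atTop).mul (hweights.pow k)).mul (hpositions.pow k)).trans ?_)
  refine .of_norm_eventuallyLE ?_
  filter_upwards [eventually_ge_atTop 1] with n hn
  have hn0 : (0 : ℝ) < n := by positivity
  rw [Function.comp_apply, ← Real.rpow_mul_natCast hn0.le, ← Real.rpow_mul_natCast hn0.le,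
    ← Real.rpow_add hn0, ← Real.rpow_add hn0, Real.norm_of_nonneg (by positivity)]
  exact Real.rpow_le_rpow_of_exponent_le (mod_cast hn) (by linarith)

end Asymptotics

theorem girg_expected_total_count_upper_general {k d : ℕ} (hd : 1 ≤ d) {τ γ m : ℝ} (hτ : 1 < τ)
    (hγ : 0 ≤ γ) (hm : 0 < m) {μW : Measure ℝ} [IsProbabilityMeasure μW]
    (hW : ∀ᵐ t ∂μW, 1 ≤ t) (hmoment : ∀ p < τ - 1, Integrable (fun t => t ^ p) μW)
    (H : SimpleGraph (Fin k)) (s : StarKind) {ε : ℝ} (hε : 0 < ε) {δ : ℝ} (hδ : 0 < δ) :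
    IsBoundedUnder (· ≤ ·) atTop fun n : ℕ =>
      (∫ ω, (starNTotal s H γ m d n ω : ℝ) ∂(girgMeasure μW d n)[|cutoffEvent τ ε d n]) /
        (n : ℝ) ^ (starOptVal s τ γ d H + δ) := by
  have hne : ∀ᶠ n : ℕ in atTop, (n : ℝ) ^ (starOptVal s τ γ d H + δ) ≠ 0 := by
    filter_upwards [eventually_gt_atTop 0] with n hn
    positivity
  have hratio := (Asymptotics.isBigO_iff_isBoundedUnder_le_div hne).1
    (isBigO_integral_starNTotal_rpow hd hτ hγ hm hε hW hmoment H s hδ)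
  exact hratio.mono_le (.of_forall fun n => (le_abs_self _).trans_eq (abs_div _ _))

/-- Theorem `totalsubgraphcounts`, upper bound: conditionally on
the cutoff event, for every `δ > 0`,
`limsup_n E[N^⋆(H) ∣ E_ε̄] / n^{f_H^* + δ} < ∞`. -/
theorem girg_expected_total_count_upper
    {k d : ℕ} (hd : 1 ≤ d) (τ γ c : ℝ) (hτ : τ ∈ Set.Ioo (2:ℝ) 3) (hγ : 1 < γ)
    (μW : Measure ℝ) [IsProbabilityMeasure μW] (hW : WeightTail τ c μW)
    (H : SimpleGraph (Fin k)) (s : StarKind)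
    (εbar : ℝ) (hεbar : 0 < εbar) (δ : ℝ) (hδ : 0 < δ) :
    IsBoundedUnder (· ≤ ·) atTop (fun n : ℕ =>
      (∫ ω, (starNTotal s H γ (wMean μW) d n ω : ℝ)
          ∂(ProbabilityTheory.cond (girgMeasure μW d n) (cutoffEvent τ εbar d n))) /
        (n : ℝ) ^ (starOptVal s τ γ d H + δ)) := by
  exact girg_expected_total_count_upper_general hd (one_lt_two.trans hτ.1) (zero_le_one.trans hγ.le)
    (hW.wMean_pos hτ.1) hW.ae_one_le (fun _ => hW.integrable_rpow) H s hεbar hδ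

end
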